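/- Let G = K_n be the complete graph on vertices v_1, v_2, …, v_n (n ≥ 3), with v_out = v_1 and v_in = v_2. Then for any r ∈ ℝ^n, the equation τ_ρ = r is solvable on G if and only if r ∈ Ψ(G). -/

import Mathlib

open scoped Classical

noncomputable section

/-- The trace of a walk: the number of occurrences of each vertex along the walk,
viewed as a vector in `ℝ^V`. -/
def trace {V : Type*} [DecidableEq V] {G : SimpleGraph V} {u v : V} (ω : G.Walk u v) : V → ℝ :=
  fun x => (ω.support.count x : ℝ)

/-- A walk from `vin` to `vout` is proper if it visits `vout` exactly once
(namely as its final vertex). -/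
def IsProper {V : Type*} [DecidableEq V] {G : SimpleGraph V} {vin vout : V}
    (ω : G.Walk vin vout) : Prop :=
  ω.support.count vout = 1

/-- The set of traces of proper walks from `vin` to `vout`, as vectors in `ℝ^V`. -/
def traceSet {V : Type*} [DecidableEq V] (G : SimpleGraph V) (vin vout : V) : Set (V → ℝ) :=
  {f | ∃ ω : G.Walk vin vout, IsProper ω ∧ f = trace ω}

/-- `Ψ(G)`: the relative interior (interior with respect to the affine span) of the convex
hull of the traces of proper walks from `vin` to `vout`. -/
def Psi {V : Type*} [Fintype V] [DecidableEq V] (G : SimpleGraph V) (vin vout : V) :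
    Set (V → ℝ) :=
  intrinsicInterior ℝ (convexHull ℝ (traceSet G vin vout))

/-- The matrix `M_β` associated to a graph `G` with distinguished vertices `vin, vout`
and vertex weights `β`. -/
def Mmat {V : Type*} [Fintype V] [DecidableEq V] (G : SimpleGraph V) (vin vout : V)
    (β : V → ℝ) : Matrix V V ℝ :=
  fun v w =>
    if (v = vout ∧ w = vout) ∨ (v = vin ∧ w = vout) then 1
    else if G.Adj v w ∧ v ≠ vout ∧ w ≠ vout then
      β v / ∑ u ∈ Finset.univ.filter (fun u => G.Adj u w), β u
    else 0

/-- The equation `τ_ρ = r` is solvable on `G`: there is a positive vertex-weight function `β`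
with `M_β r = r` and `r(vout) = 1`. -/
def Solvable {V : Type*} [Fintype V] [DecidableEq V] (G : SimpleGraph V) (vin vout : V)
    (r : V → ℝ) : Prop :=
  ∃ β : V → ℝ, (∀ v, 0 < β v) ∧ (Mmat G vin vout β).mulVec r = r ∧ r vout = 1

/-!
Normalize the weights to `∑ v, β v = 1` and write `δ` for the indicator of `vin`. On the complete
graph the fixed-point equation then has the closed-form solution
`r v = (1 - β v) * (δ v + β v / β vout)` for `v ≠ vout`. Such an `r` is an explicit convex
combination, with weights `β`, of points of the convex hull of the traces, since traces can be
prolonged by arbitrarily many round trips. It also satisfies `δ v < r v` and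
`r v - δ v < ∑ w ≠ v, vout, r w`, whose non-strict forms hold for every trace.

Conversely, any `r` with `r vout = 1` satisfying these strict inequalities is an occupation vector:
for fixed `t = β vout` each `β v` is a root of `z * (1 - z) = t * (r v - δ v + δ v * z)`, and the
intermediate value theorem finds roots and `t` of total `1`. So the solvable vectors form a
relatively open subset of the convex hull; and since the inequalities are strict at one point of the
hull, they are strict on its whole relative interior.
-/

open Finset

section Convexity

variable {E : Type*} [AddCommGroup E] [Module ℝ E]

theorem add_smul_mem_of_forall_nat {K : Set E} (hK : Convex ℝ K) {p d : E}
    (h : ∀ N : ℕ, p + (N : ℝ) • d ∈ K) {c : ℝ} (hc : 0 ≤ c) : p + c • d ∈ K := by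
  obtain ⟨N, hN⟩ := exists_nat_gt c
  have hN₀ : (0 : ℝ) < N := hc.trans_lt hN
  have hmem := hK.add_smul_mem (by simpa using h 0) (h N)
    ⟨div_nonneg hc hN₀.le, (div_le_one hN₀).2 hN.le⟩
  rwa [smul_smul, div_mul_cancel₀ _ hN₀.ne'] at hmem

theorem add_smul_sum_mem_of_forall_smul {ι : Type*} {K : Set E} (hK : Convex ℝ K) {p : E}
    (hp : p ∈ K) {s : Finset ι} {d : ι → E}
    (h : ∀ i ∈ s, ∀ c : ℝ, 0 ≤ c → p + c • d i ∈ K) :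
    ∀ c : ℝ, 0 ≤ c → p + c • ∑ i ∈ s, d i ∈ K := by
  refine Finset.sum_induction d (fun x => ∀ c : ℝ, 0 ≤ c → p + c • x ∈ K) ?_ ?_ h
  · intro x y hx hy c hc
    have hmid := hK (hx (2 * c) (by positivity)) (hy (2 * c) (by positivity))
      (by norm_num : (0 : ℝ) ≤ 1 / 2) (by norm_num : (0 : ℝ) ≤ 1 / 2) (by norm_num)
    convert hmid using 1
    module
  · simpa using fun _ _ => hp

variable [TopologicalSpace E]

theorem exists_lineMap_mem_of_mem_intrinsicInterior [IsTopologicalAddGroup E]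
    [ContinuousSMul ℝ E] {K : Set E} {r p : E} (hr : r ∈ intrinsicInterior ℝ K) (hp : p ∈ K) :
    ∃ c : ℝ, 1 < c ∧ AffineMap.lineMap p r c ∈ K := by
  obtain ⟨r, hr, rfl⟩ := hr
  let line (c : ℝ) : affineSpan ℝ K :=
    ⟨AffineMap.lineMap p (r : E) c,
      AffineMap.lineMap_mem c (subset_affineSpan ℝ K hp) r.2⟩
  have hline : Continuous line := AffineMap.lineMap_continuous.subtype_mk _
  have hone : line 1 = r := Subtype.ext (AffineMap.lineMap_apply_one _ _)
  have hnear : ∀ᶠ c in nhds (1 : ℝ), line c ∈ interior (Subtype.val ⁻¹' K) :=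
    hline.continuousAt.eventually_mem (isOpen_interior.mem_nhds (hone ▸ hr))
  obtain ⟨c, hc, hc₁⟩ := ((hnear.filter_mono nhdsWithin_le_nhds).and
    (self_mem_nhdsWithin : Set.Ioi (1 : ℝ) ∈ nhdsWithin 1 (Set.Ioi 1))).exists
  exact ⟨c, hc₁, show line c ∈ Subtype.val ⁻¹' K from interior_subset hc⟩

theorem lt_of_mem_intrinsicInterior_convexHull [IsTopologicalAddGroup E] [ContinuousSMul ℝ E]
    {S : Set E} (ℓ : E →ₗ[ℝ] ℝ) {b : ℝ} (hS : ∀ f ∈ S, b ≤ ℓ f) {p r : E}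
    (hp : p ∈ convexHull ℝ S) (hbp : b < ℓ p) (hr : r ∈ intrinsicInterior ℝ (convexHull ℝ S)) :
    b < ℓ r := by
  obtain ⟨c, hc, hmem⟩ := exists_lineMap_mem_of_mem_intrinsicInterior hr hp
  have hle : b ≤ ℓ (AffineMap.lineMap p r c) :=
    convexHull_min hS (convex_halfSpace_ge ℓ.isLinear b) hmem
  rw [AffineMap.lineMap_apply_module, map_add, map_smul, map_smul, smul_eq_mul, smul_eq_mul] at hle
  nlinarith

theorem mem_intrinsicInterior_of_isOpen {K U : Set E} (hU : IsOpen U)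
    (hUK : U ∩ affineSpan ℝ K ⊆ K) {r : E} (hr : r ∈ U) (hrK : r ∈ K) :
    r ∈ intrinsicInterior ℝ K :=
  ⟨⟨r, subset_affineSpan ℝ K hrK⟩,
    mem_interior.2
      ⟨Subtype.val ⁻¹' U, fun y hy => hUK ⟨hy, y.2⟩, hU.preimage continuous_subtype_val, hr⟩,
    rfl⟩

end Convexity

section Trace

variable {V : Type*} [DecidableEq V] {G : SimpleGraph V} {x y out : V}

theorem trace_nil : trace (SimpleGraph.Walk.nil : G.Walk x x) = Pi.single x 1 := by
  ext v
  simp [trace, Pi.single_apply, List.count_singleton, eq_comm (a := v)]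

theorem trace_cons (h : G.Adj x y) (ω : G.Walk y out) :
    trace (ω.cons h) = Pi.single x 1 + trace ω := by
  ext v
  simp [trace, Pi.single_apply, List.count_cons, eq_comm (a := v), add_comm]

theorem single_le_trace (ω : G.Walk x y) : Pi.single x 1 ≤ trace ω := by
  cases ω with
  | nil => exact trace_nil.ge
  | cons h ω =>
    rw [trace_cons]
    exact le_add_of_nonneg_right fun v => Nat.cast_nonneg _

theorem two_mul_trace_add_one_le [Fintype V] (ω : G.Walk x y) (v : V) :
    2 * trace ω v + 1 ≤ ∑ w, trace ω w + (Pi.single x 1 : V → ℝ) v +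
      (Pi.single y 1 : V → ℝ) v := by
  induction ω with
  | nil =>
    simp only [trace_nil, Finset.sum_pi_single', mem_univ, if_true]
    linarith
  | @cons x y z h ω ih =>
    have hxy : (Pi.single x 1 : V → ℝ) v + (Pi.single y 1 : V → ℝ) v ≤ 1 := by
      have := h.ne
      simp only [Pi.single_apply]
      split_ifs <;> simp_all
    simp only [trace_cons, Pi.add_apply, sum_add_distrib, Finset.sum_pi_single', mem_univ, if_true]
    linarith

theorem apply_out_of_mem_traceSet {f : V → ℝ} (hf : f ∈ traceSet G x out) : f out = 1 := by
  obtain ⟨ω, hω, rfl⟩ := hf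
  rw [trace, hω, Nat.cast_one]

theorem single_le_of_mem_traceSet {f : V → ℝ} (hf : f ∈ traceSet G x out) :
    Pi.single x 1 ≤ f := by
  obtain ⟨ω, -, rfl⟩ := hf
  exact single_le_trace ω

theorem sub_single_le_sum_of_mem_traceSet [Fintype V] {f : V → ℝ} (hf : f ∈ traceSet G x out)
    {v : V} (hv : v ≠ out) :
    f v - (Pi.single x 1 : V → ℝ) v ≤ ∑ w ∈ (univ.erase out).erase v, f w := by
  have hout := apply_out_of_mem_traceSet hf
  obtain ⟨ω, -, rfl⟩ := hf
  have hω := two_mul_trace_add_one_le ω v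
  rw [Pi.single_eq_of_ne hv] at hω
  rw [sum_erase_eq_sub (by simpa using hv), sum_erase_eq_sub (mem_univ _), hout]
  linarith

theorem apply_out_of_mem_affineSpan_convexHull_traceSet {f : V → ℝ}
    (hf : f ∈ affineSpan ℝ (convexHull ℝ (traceSet G x out))) : f out = 1 := by
  rw [affineSpan_convexHull] at hf
  refine affineSpan_induction (p := fun f => f out = 1) hf
    (fun _ => apply_out_of_mem_traceSet) ?_
  intro c f g h hf hg hh
  simp [hf, hg, hh]

theorem single_add_single_mem_traceSet (h : G.Adj x out) :
    Pi.single x 1 + Pi.single out 1 ∈ traceSet G x out :=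
  ⟨.cons h .nil, by simp [IsProper, h.ne], by rw [trace_cons, trace_nil]⟩

theorem single_add_mem_traceSet (h : G.Adj x y) (hx : x ≠ out) {f : V → ℝ}
    (hf : f ∈ traceSet G y out) : Pi.single x 1 + f ∈ traceSet G x out := by
  obtain ⟨ω, hω, rfl⟩ := hf
  exact ⟨.cons h ω, by simpa [IsProper, List.count_cons, hx] using hω, (trace_cons h ω).symm⟩

theorem add_roundTrips_mem_traceSet (h : G.Adj x y) (hx : x ≠ out) (hy : y ≠ out)
    {f : V → ℝ} (hf : f ∈ traceSet G x out) (N : ℕ) :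
    f + (N : ℝ) • (Pi.single x 1 + Pi.single y 1) ∈ traceSet G x out := by
  induction N with
  | zero => simpa using hf
  | succ N ih =>
    convert single_add_mem_traceSet h hx (single_add_mem_traceSet h.symm hy ih) using 1
    push_cast
    module

end Trace

section Roots

/-- The parameter `t` for which `s` is a root of `z * (1 - z) = t * (a + d * z)`. -/
def rootParam (a d s : ℝ) : ℝ := s * (1 - s) / (a + d * s)

/-- The parameters `t` for which `z * (1 - z) = t * (a + d * z)` has real roots with positive sum
`1 - d * t`; for `0 < a` and `0 < t` both roots are then positive. -/
def rootParams (a d : ℝ) : Set ℝ := {t | 0 < 1 - d * t ∧ 4 * t * a ≤ (1 - d * t) ^ 2}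

/-- The smaller root of `z * (1 - z) = t * (a + d * z)`; meaningful for `t ∈ rootParams a d`. -/
def smallRoot (a d t : ℝ) : ℝ := (1 - d * t - √((1 - d * t) ^ 2 - 4 * t * a)) / 2

variable {a d s t : ℝ}

theorem rootParam_mul (ha : 0 < a) (hd : 0 ≤ d) (hs : 0 ≤ s) :
    rootParam a d s * (a + d * s) = s * (1 - s) :=
  div_mul_cancel₀ _ (by positivity)

theorem rootParam_pos (ha : 0 < a) (hd : 0 ≤ d) (hs : s ∈ Set.Ioo 0 1) : 0 < rootParam a d s := by
  obtain ⟨hs₀, hs₁⟩ := hs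
  exact div_pos (mul_pos hs₀ (sub_pos.2 hs₁)) (by positivity)

theorem continuousOn_rootParam (ha : 0 < a) (hd : 0 ≤ d) :
    ContinuousOn (rootParam a d) (Set.Ici 0) := by
  refine ContinuousOn.div (by fun_prop) (by fun_prop) fun s (hs : 0 ≤ s) => ?_
  positivity

theorem rootParam_mem_rootParams (ha : 0 < a) (hd : 0 ≤ d) (hs : s ∈ Set.Ioo 0 1) :
    rootParam a d s ∈ rootParams a d := by
  have hroot := rootParam_mul ha hd hs.1.le
  set t := rootParam a d s
  constructor
  · have hden : 0 < a + d * s := add_pos_of_pos_of_nonneg ha (mul_nonneg hd hs.1.le)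
    have hprod : (1 - d * t) * (a + d * s) = a + d * s ^ 2 := by linear_combination (-d) * hroot
    refine pos_of_mul_pos_left ?_ hden.le
    rw [hprod]
    positivity
  · have hdisc : (1 - d * t) ^ 2 - 4 * t * a = (1 - d * t - 2 * s) ^ 2 := by
      linear_combination (-4) * hroot
    exact sub_nonneg.1 (hdisc ▸ sq_nonneg _)

theorem isLowerSet_rootParams (ha : 0 ≤ a) (hd : 0 ≤ d) : IsLowerSet (rootParams a d) := by
  rintro t t' htt ⟨hpos, hdisc⟩
  have hle : 1 - d * t ≤ 1 - d * t' := by gcongr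
  refine ⟨hpos.trans_le hle, ?_⟩
  calc 4 * t' * a ≤ 4 * t * a := by gcongr
    _ ≤ (1 - d * t) ^ 2 := hdisc
    _ ≤ (1 - d * t') ^ 2 := by gcongr

theorem smallRoot_zero : smallRoot a d 0 = 0 := by simp [smallRoot]

theorem continuous_smallRoot : Continuous (smallRoot a d) := by
  unfold smallRoot
  fun_prop

theorem smallRoot_mul_one_sub (ht : t ∈ rootParams a d) :
    smallRoot a d t * (1 - smallRoot a d t) = t * (a + d * smallRoot a d t) := by
  have hsq := Real.sq_sqrt (sub_nonneg.2 ht.2)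
  unfold smallRoot
  linear_combination (-1 / 4) * hsq

theorem smallRoot_pos (ha : 0 < a) (ht₀ : 0 < t) (ht : t ∈ rootParams a d) :
    0 < smallRoot a d t := by
  have hsqrt : √((1 - d * t) ^ 2 - 4 * t * a) < 1 - d * t := by
    rw [Real.sqrt_lt' ht.1]
    linarith [mul_pos ht₀ ha]
  unfold smallRoot
  linarith

theorem mul_le_smallRoot (ha : 0 < a) (hd : 0 ≤ d) (ht₀ : 0 < t) (ht : t ∈ rootParams a d) :
    t * a ≤ smallRoot a d t := by
  have hpos := smallRoot_pos ha ht₀ ht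
  have hroot := smallRoot_mul_one_sub ht
  have hlin : 0 ≤ t * d * smallRoot a d t := by positivity
  nlinarith [sq_nonneg (smallRoot a d t)]

end Roots

section WeightSum

variable {ι : Type*} {W : Finset ι} {a d : ι → ℝ}

theorem exists_rootParams_subset (hW : W.Nonempty) (ha : ∀ v ∈ W, 0 < a v)
    (hd : ∀ v ∈ W, 0 ≤ d v) :
    ∃ x ∈ W, ∀ w ∈ W, rootParams (a x) (d x) ⊆ rootParams (a w) (d w) := by
  have hlower (v) (hv : v ∈ W) : IsLowerSet (rootParams (a v) (d v)) :=
    isLowerSet_rootParams (ha v hv).le (hd v hv)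
  obtain ⟨x, hx, hmin⟩ := W.exists_minimalFor (fun v => rootParams (a v) (d v)) hW
  exact ⟨x, hx, fun w hw => ((hlower x hx).total (hlower w hw)).elim id (hmin hw)⟩

variable [DecidableEq ι] {x : ι}

/-- The total `∑ v ∈ W, z v + t` for the parameter `t` at which `x` has root `s`, where `z x = s`
and every other `z v` is the smaller root. Letting `s` range over both roots of `x` is what makes
the total `1` attainable. -/
def weightSum (W : Finset ι) (a d : ι → ℝ) (x : ι) (s : ℝ) : ℝ :=
  s + rootParam (a x) (d x) s + ∑ w ∈ W.erase x, smallRoot (a w) (d w) (rootParam (a x) (d x) s)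

theorem weightSum_zero : weightSum W a d x 0 = 0 := by
  simp [weightSum, rootParam, smallRoot_zero]

theorem continuousOn_weightSum (ha : 0 < a x) (hd : 0 ≤ d x) :
    ContinuousOn (weightSum W a d x) (Set.Ici 0) := by
  have hparam := continuousOn_rootParam ha hd
  exact (continuousOn_id.add hparam).add
    (continuousOn_finsetSum _ fun w _ => continuous_smallRoot.comp_continuousOn hparam)

theorem exists_one_lt_weightSum (ha : ∀ v ∈ W, 0 < a v) (hd : ∀ v ∈ W, 0 ≤ d v) (hx : x ∈ W)
    (hsub : ∀ w ∈ W, rootParams (a x) (d x) ⊆ rootParams (a w) (d w))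
    (hlt : a x + d x < 1 + ∑ w ∈ W.erase x, a w) :
    ∃ s ∈ Set.Ioo (0 : ℝ) 1, 1 < weightSum W a d x s := by
  set L := 1 + ∑ w ∈ W.erase x, a w with hL
  have hax := ha x hx
  have hdx := hd x hx
  have hLd : 0 < L - d x := by linarith
  obtain ⟨s, hs, hs₁⟩ := exists_between ((div_lt_one hLd).2 (lt_sub_iff_add_lt.2 hlt))
  have hs₀ : 0 < s := (div_pos hax hLd).trans hs
  have hsI : s ∈ Set.Ioo (0 : ℝ) 1 := ⟨hs₀, hs₁⟩
  refine ⟨s, hsI, ?_⟩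
  have htpos := rootParam_pos hax hdx hsI
  have hroot := rootParam_mul hax hdx hs₀.le
  have htmem := rootParam_mem_rootParams hax hdx hsI
  unfold weightSum
  set t := rootParam (a x) (d x) s
  have hsmall : t * (L - 1) ≤ ∑ w ∈ W.erase x, smallRoot (a w) (d w) t := by
    rw [hL, add_sub_cancel_left, mul_sum]
    refine sum_le_sum fun w hw => ?_
    have hwW := mem_of_mem_erase hw
    exact mul_le_smallRoot (ha w hwW) (hd w hwW) htpos (hsub w hwW htmem)
  have hbig : 1 - s < t * L := by
    have hden : a x + d x * s < s * L := by
      rw [div_lt_iff₀ hLd] at hs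
      linarith
    refine lt_of_mul_lt_mul_left ?_ hs₀.le
    calc s * (1 - s) = t * (a x + d x * s) := hroot.symm
      _ < t * (s * L) := by gcongr
      _ = s * (t * L) := by ring
  linarith

theorem exists_weightSum_eq_one (ha : ∀ v ∈ W, 0 < a v) (hd : ∀ v ∈ W, 0 ≤ d v) (hx : x ∈ W)
    (hsub : ∀ w ∈ W, rootParams (a x) (d x) ⊆ rootParams (a w) (d w))
    (hlt : a x + d x < 1 + ∑ w ∈ W.erase x, a w) :
    ∃ s ∈ Set.Ioo (0 : ℝ) 1, weightSum W a d x s = 1 := by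
  obtain ⟨s₁, ⟨hs₀, hs₁⟩, hgt⟩ := exists_one_lt_weightSum ha hd hx hsub hlt
  have hcont : ContinuousOn (weightSum W a d x) (Set.Icc 0 s₁) :=
    (continuousOn_weightSum (ha x hx) (hd x hx)).mono Set.Icc_subset_Ici_self
  obtain ⟨s, hs, hsum⟩ := intermediate_value_Ioo hs₀.le hcont
    (show (1 : ℝ) ∈ Set.Ioo _ _ from ⟨weightSum_zero.trans_lt one_pos, hgt⟩)
  exact ⟨s, ⟨hs.1, hs.2.trans hs₁⟩, hsum⟩

theorem exists_roots_sum_add_eq_one (hW : W.Nonempty) (ha : ∀ v ∈ W, 0 < a v)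
    (hd : ∀ v ∈ W, 0 ≤ d v) (hlt : ∀ v ∈ W, a v + d v < 1 + ∑ w ∈ W.erase v, a w) :
    ∃ t : ℝ, 0 < t ∧ ∃ z : ι → ℝ,
      (∀ v ∈ W, 0 < z v ∧ z v * (1 - z v) = t * (a v + d v * z v)) ∧ ∑ v ∈ W, z v + t = 1 := by
  obtain ⟨x, hx, hsub⟩ := exists_rootParams_subset hW ha hd
  obtain ⟨s, hs, hsum⟩ := exists_weightSum_eq_one ha hd hx hsub (hlt x hx)
  have hax := ha x hx
  have hdx := hd x hx
  have htpos := rootParam_pos hax hdx hs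
  have htmem := rootParam_mem_rootParams hax hdx hs
  have hroot := rootParam_mul hax hdx hs.1.le
  unfold weightSum at hsum
  set t := rootParam (a x) (d x) s
  refine ⟨t, htpos, Function.update (fun w => smallRoot (a w) (d w) t) x s, fun v hv => ?_, ?_⟩
  · obtain rfl | hvx := eq_or_ne v x
    · simpa only [Function.update_self] using ⟨hs.1, hroot.symm⟩
    · simpa only [Function.update_of_ne hvx] using
        ⟨smallRoot_pos (ha v hv) htpos (hsub v hv htmem), smallRoot_mul_one_sub (hsub v hv htmem)⟩
  · rw [sum_update_of_mem hx, ← erase_eq]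
    linarith

end WeightSum

section Occupation

variable {V : Type*} [Fintype V]

theorem apply_lt_one_of_sum_eq_one {β : V → ℝ} (hβ : ∀ v, 0 < β v) (hsum : ∑ v, β v = 1) {u v : V}
    (huv : u ≠ v) : β u < 1 := by
  have hle := add_le_sum (fun i _ => (hβ i).le) (mem_univ u) (mem_univ v) huv
  linarith [hβ v]

variable [DecidableEq V] {vin vout : V} {r : V → ℝ}

theorem Mmat_smul (G : SimpleGraph V) (vin vout : V) (β : V → ℝ) {c : ℝ} (hc : c ≠ 0) :
    Mmat G vin vout (c • β) = Mmat G vin vout β := by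
  ext v w
  simp only [Mmat, Pi.smul_apply, smul_eq_mul, ← mul_sum, mul_div_mul_left _ _ hc]

theorem solvable_iff_exists_sum_eq_one {G : SimpleGraph V} :
    Solvable G vin vout r ↔ ∃ β : V → ℝ, (∀ v, 0 < β v) ∧ ∑ v, β v = 1 ∧
      (Mmat G vin vout β).mulVec r = r ∧ r vout = 1 := by
  constructor
  · rintro ⟨β, hβ, hfix, hout⟩
    have hsum : 0 < ∑ v, β v := sum_pos (fun v _ => hβ v) ⟨vout, mem_univ _⟩
    have hc := inv_pos.2 hsum
    refine ⟨(∑ v, β v)⁻¹ • β, fun v => mul_pos hc (hβ v), ?_, ?_, hout⟩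
    · simp only [Pi.smul_apply, smul_eq_mul, ← mul_sum, inv_mul_cancel₀ hsum.ne']
    · rwa [Mmat_smul _ _ _ _ hc.ne']
  · rintro ⟨β, hβ, -, hfix, hout⟩
    exact ⟨β, hβ, hfix, hout⟩

theorem Mmat_mulVec_apply_out (G : SimpleGraph V) (vin : V) (β r : V → ℝ) :
    (Mmat G vin vout β).mulVec r vout = r vout := by
  rw [Matrix.mulVec, dotProduct, sum_eq_single vout]
  · simp [Mmat]
  · intro w _ hw
    simp [Mmat, hw]
  · simp

theorem Mmat_top_apply_of_ne {β : V → ℝ} (hsum : ∑ u, β u = 1) {v w : V} (hv : v ≠ vout)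
    (hw : w ≠ vout) (hwv : w ≠ v) :
    Mmat (⊤ : SimpleGraph V) vin vout β v w = β v / (1 - β w) := by
  rw [Mmat, if_neg (by tauto), if_pos ⟨hwv.symm, hv, hw⟩, ← hsum, ← sum_erase_eq_sub (mem_univ w)]
  exact congrArg _ (sum_congr (by ext u; simp) fun _ _ => rfl)

theorem Mmat_top_mulVec_apply {β : V → ℝ} (hsum : ∑ u, β u = 1) (r : V → ℝ) {v : V}
    (hv : v ≠ vout) :
    (Mmat (⊤ : SimpleGraph V) vin vout β).mulVec r v = (Pi.single vin 1 : V → ℝ) v * r vout +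
      β v * ∑ w ∈ (univ.erase vout).erase v, r w / (1 - β w) := by
  have hvW : v ∈ univ.erase vout := mem_erase.2 ⟨hv, mem_univ v⟩
  have hdiag : Mmat (⊤ : SimpleGraph V) vin vout β v v = 0 := by simp [Mmat, hv]
  have hstart : Mmat (⊤ : SimpleGraph V) vin vout β v vout = (Pi.single vin 1 : V → ℝ) v := by
    simp [Mmat, hv, Pi.single_apply]
  rw [Matrix.mulVec, dotProduct, ← add_sum_erase _ _ (mem_univ vout), ← add_sum_erase _ _ hvW,
    hdiag, hstart, zero_mul, zero_add, mul_sum]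
  refine congrArg _ (sum_congr rfl fun w hw => ?_)
  obtain ⟨hwv, hwout, -⟩ := by simpa only [mem_erase] using hw
  rw [Mmat_top_apply_of_ne hsum hv hwout hwv]
  ring

/-- `r` is the vector of expected occupation times of the walk on the complete graph with
normalized vertex weights `β`, in closed form. -/
structure IsOccupation (vin vout : V) (β r : V → ℝ) : Prop where
  pos : ∀ v, 0 < β v
  sum_eq_one : ∑ v, β v = 1
  apply_out : r vout = 1
  apply_of_ne : ∀ v ≠ vout,
    r v = (1 - β v) * ((Pi.single vin 1 : V → ℝ) v + β v / β vout)

theorem sum_erase_single (hne : vin ≠ vout) :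
    ∑ w ∈ univ.erase vout, (Pi.single vin 1 : V → ℝ) w = 1 := by
  simp [sum_pi_single', hne]

namespace IsOccupation

variable {β : V → ℝ}

theorem exists_of_weights (vin vout : V) (hβ : ∀ v, 0 < β v) (hsum : ∑ v, β v = 1) :
    ∃ r, IsOccupation vin vout β r :=
  ⟨Function.update (fun v => (1 - β v) * ((Pi.single vin 1 : V → ℝ) v + β v / β vout)) vout 1,
    hβ, hsum, Function.update_self .., fun _ hv => Function.update_of_ne hv ..⟩

theorem one_sub_pos (h : IsOccupation vin vout β r) {v : V} (hv : v ≠ vout) : 0 < 1 - β v :=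
  sub_pos.2 (apply_lt_one_of_sum_eq_one h.pos h.sum_eq_one hv)

theorem sub_single_eq (h : IsOccupation vin vout β r) (hne : vin ≠ vout) {v : V} (hv : v ≠ vout) :
    r v - (Pi.single vin 1 : V → ℝ) v = β v *
      ∑ w ∈ (univ.erase vout).erase v, ((Pi.single vin 1 : V → ℝ) w + β w / β vout) := by
  have hout := (h.pos vout).ne'
  rw [sum_erase_eq_sub (by simpa using hv), sum_add_distrib, sum_erase_single hne, ← sum_div,
    sum_erase_eq_sub (mem_univ _), h.sum_eq_one, h.apply_of_ne v hv]
  field_simp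
  ring

theorem mulVec_eq (h : IsOccupation vin vout β r) (hne : vin ≠ vout) :
    (Mmat (⊤ : SimpleGraph V) vin vout β).mulVec r = r := by
  ext v
  obtain rfl | hv := eq_or_ne v vout
  · exact Mmat_mulVec_apply_out _ vin β r
  · have hterm (w) (hw : w ∈ (univ.erase vout).erase v) :
        r w / (1 - β w) = (Pi.single vin 1 : V → ℝ) w + β w / β vout := by
      have hw : w ≠ vout := ne_of_mem_erase (mem_of_mem_erase hw)
      rw [h.apply_of_ne w hw, mul_div_cancel_left₀ _ (h.one_sub_pos hw).ne']
    rw [Mmat_top_mulVec_apply h.sum_eq_one r hv, h.apply_out, mul_one, sum_congr rfl hterm,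
      ← h.sub_single_eq hne hv, add_sub_cancel]

theorem of_mulVec_eq (hβ : ∀ v, 0 < β v) (hsum : ∑ v, β v = 1) (hne : vin ≠ vout)
    (hfix : (Mmat (⊤ : SimpleGraph V) vin vout β).mulVec r = r) (hout : r vout = 1) :
    IsOccupation vin vout β r := by
  -- With `x v = r v / (1 - β v)` and `S = ∑ x`, the fixed-point equation says
  -- `x v = δ v + β v * S`; summing over `v` gives `S = 1 / β vout`.
  refine ⟨hβ, hsum, hout, ?_⟩
  have hβout := (hβ vout).ne'
  have hrest (v) (hv : v ≠ vout) : 1 - β v ≠ 0 :=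
    (sub_pos.2 (apply_lt_one_of_sum_eq_one hβ hsum hv)).ne'
  set S := ∑ w ∈ univ.erase vout, r w / (1 - β w) with hS
  have hx (v) (hv : v ≠ vout) : r v / (1 - β v) = (Pi.single vin 1 : V → ℝ) v + β v * S := by
    have hv' := Mmat_top_mulVec_apply (vin := vin) hsum r hv
    rw [hfix, hout, sum_erase_eq_sub (by simpa using hv), ← hS] at hv'
    have := hrest v hv
    field_simp at hv' ⊢
    linear_combination hv'
  have hSval : S = 1 / β vout := by
    have hSsum : S = 1 + (1 - β vout) * S := by
      conv_lhs => rw [hS, sum_congr rfl fun v hv => hx v (ne_of_mem_erase hv), sum_add_distrib,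
        sum_erase_single hne, ← sum_mul, sum_erase_eq_sub (mem_univ _), hsum]
    field_simp
    linear_combination hSsum
  intro v hv
  have := hx v hv
  rw [div_eq_iff (hrest v hv), hSval] at this
  rw [this]
  ring

end IsOccupation

theorem solvable_top_iff_exists_isOccupation (hne : vin ≠ vout) :
    Solvable (⊤ : SimpleGraph V) vin vout r ↔ ∃ β, IsOccupation vin vout β r := by
  rw [solvable_iff_exists_sum_eq_one]
  exact ⟨fun ⟨β, hβ, hsum, hfix, hout⟩ => ⟨β, .of_mulVec_eq hβ hsum hne hfix hout⟩,
    fun ⟨β, h⟩ => ⟨β, h.pos, h.sum_eq_one, h.mulVec_eq hne, h.apply_out⟩⟩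

end Occupation

section Region

variable {V : Type*} [Fintype V] [DecidableEq V] {vin vout : V} {r : V → ℝ}

/-- The open region cut out by the strict forms of two constraints on traces: a walk makes a
nonnegative number of visits to `v` besides the initial one, and each of these is immediately
preceded by a visit to a vertex other than `v` and `vout`. Its slice `r vout = 1` is the common
description of `Ψ` and of the solvable `r` on the complete graph. -/
def occupationRegion (vin vout : V) : Set (V → ℝ) :=
  {r | ∀ v ≠ vout, (Pi.single vin 1 : V → ℝ) v < r v ∧
    r v - (Pi.single vin 1 : V → ℝ) v < ∑ w ∈ (univ.erase vout).erase v, r w}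

theorem isOpen_occupationRegion (vin vout : V) : IsOpen (occupationRegion vin vout) := by
  simp only [occupationRegion, Set.ofPred_forall]
  refine isOpen_iInter_of_finite fun v => isOpen_iInter_of_finite fun _ => IsOpen.and ?_ ?_
  · exact isOpen_lt (by fun_prop) (by fun_prop)
  · exact isOpen_lt (by fun_prop) (by fun_prop)

theorem erase_erase_nonempty (hV : 3 ≤ Fintype.card V) (u v : V) :
    ((univ.erase u).erase v).Nonempty := by
  have h₁ := pred_card_le_card_erase (s := univ) (a := u)
  have h₂ := pred_card_le_card_erase (s := univ.erase u) (a := v)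
  rw [card_univ] at h₁
  exact card_pos.1 (by omega)

theorem IsOccupation.mem_occupationRegion {β : V → ℝ} (h : IsOccupation vin vout β r)
    (hV : 3 ≤ Fintype.card V) (hne : vin ≠ vout) : r ∈ occupationRegion vin vout := by
  intro v hv
  have hothers := erase_erase_nonempty hV vout v
  have hδ : (0 : V → ℝ) ≤ Pi.single vin 1 := Pi.single_nonneg.2 zero_le_one
  have hx (w : V) : 0 < (Pi.single vin 1 : V → ℝ) w + β w / β vout :=
    add_pos_of_nonneg_of_pos (hδ w) (div_pos (h.pos w) (h.pos vout))
  rw [← sub_pos, h.sub_single_eq hne hv]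
  refine ⟨mul_pos (h.pos v) (sum_pos (fun w _ => hx w) hothers), ?_⟩
  rw [mul_sum]
  refine sum_lt_sum_of_nonempty hothers fun w hw => ?_
  obtain ⟨hwv, hwout, -⟩ := by simpa only [mem_erase] using hw
  rw [h.apply_of_ne w hwout]
  have hlt : β v < 1 - β w := by
    have hle := add_le_sum (fun i _ => (h.pos i).le) (mem_erase.2 ⟨hv, mem_univ v⟩)
      (mem_erase.2 ⟨hwout, mem_univ w⟩) hwv.symm
    rw [sum_erase_eq_sub (mem_univ _), h.sum_eq_one] at hle
    linarith [h.pos vout]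
  exact mul_lt_mul_of_pos_right hlt (hx w)

theorem exists_isOccupation_of_mem_occupationRegion (hne : vin ≠ vout) (hout : r vout = 1)
    (hr : r ∈ occupationRegion vin vout) : ∃ β, IsOccupation vin vout β r := by
  have hvin : vin ∈ univ.erase vout := mem_erase.2 ⟨hne, mem_univ _⟩
  have hδ : (0 : V → ℝ) ≤ Pi.single vin 1 := Pi.single_nonneg.2 zero_le_one
  let a (v : V) : ℝ := r v - (Pi.single vin 1 : V → ℝ) v
  have hlt (v) (hv : v ∈ univ.erase vout) :
      a v + (Pi.single vin 1 : V → ℝ) v < 1 + ∑ w ∈ (univ.erase vout).erase v, a w := by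
    have hup := (hr v (ne_of_mem_erase hv)).2
    simp only [a, sum_sub_distrib]
    rw [sum_erase_eq_sub (f := (Pi.single vin 1 : V → ℝ)) hv, sum_erase_single hne]
    linarith
  obtain ⟨t, ht, z, hz, hsum⟩ := exists_roots_sum_add_eq_one (a := a) ⟨vin, hvin⟩
    (fun v hv => sub_pos.2 (hr v (ne_of_mem_erase hv)).1) (fun v _ => hδ v) hlt
  have hzt (v) (hv : v ≠ vout) : Function.update z vout t v = z v := Function.update_of_ne hv ..
  refine ⟨Function.update z vout t, fun v => ?_, ?_, hout, fun v hv => ?_⟩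
  · obtain rfl | hv := eq_or_ne v vout
    · rwa [Function.update_self]
    · exact (hzt v hv).symm ▸ (hz v (by simpa using hv)).1
  · rw [sum_update_of_mem (mem_univ _), ← erase_eq, add_comm, hsum]
  · have hroot := (hz v (by simpa using hv)).2
    rw [hzt v hv, Function.update_self]
    simp only [a] at hroot
    field_simp
    linear_combination -hroot

theorem solvable_top_iff_mem_occupationRegion (hV : 3 ≤ Fintype.card V) (hne : vin ≠ vout) :
    Solvable (⊤ : SimpleGraph V) vin vout r ↔ r vout = 1 ∧ r ∈ occupationRegion vin vout := by
  rw [solvable_top_iff_exists_isOccupation hne]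
  exact ⟨fun ⟨_, h⟩ => ⟨h.apply_out, h.mem_occupationRegion hV hne⟩,
    fun ⟨hout, hr⟩ => exists_isOccupation_of_mem_occupationRegion hne hout hr⟩

end Region

section Hull

variable {V : Type*} [DecidableEq V] {vin vout : V}

theorem add_roundTrips_mem_traceSet_top (hne : vin ≠ vout) {x y : V} (hx : x ≠ vout)
    (hy : y ≠ vout) (hxy : x ≠ y) (N : ℕ) :
    (Pi.single vin 1 + Pi.single vout 1) + (N : ℝ) • (Pi.single x 1 + Pi.single y 1)
      ∈ traceSet (⊤ : SimpleGraph V) vin vout := by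
  have hbase := single_add_single_mem_traceSet (G := ⊤) hne
  obtain rfl | hxin := eq_or_ne x vin
  · exact add_roundTrips_mem_traceSet hxy hx hy hbase N
  cases N with
  | zero => simpa using hbase
  | succ N =>
    have hlast := single_add_mem_traceSet (G := ⊤) hxy hx (single_add_single_mem_traceSet hy)
    have hloop := add_roundTrips_mem_traceSet hxy hx hy hlast N
    convert single_add_mem_traceSet hxin.symm hne hloop using 1
    push_cast
    module

theorem single_add_single_add_single_mem_traceSet_top (hne : vin ≠ vout) {v : V} (hv : v ≠ vout)
    (hvin : v ≠ vin) :
    (Pi.single vin 1 + Pi.single vout 1) + Pi.single v 1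
      ∈ traceSet (⊤ : SimpleGraph V) vin vout := by
  rw [add_assoc, add_comm (Pi.single vout 1)]
  exact single_add_mem_traceSet hvin.symm hne (single_add_single_mem_traceSet hv)

theorem add_sum_pairs_mem_convexHull_traceSet_top (hne : vin ≠ vout) {W : Finset V}
    (hW : vout ∉ W) {c : V → V → ℝ} (hc : ∀ v w, 0 ≤ c v w) :
    (Pi.single vin 1 + Pi.single vout 1) +
        ∑ v ∈ W, ∑ w ∈ W.erase v, c v w • (Pi.single v 1 + Pi.single w 1)
      ∈ convexHull ℝ (traceSet (⊤ : SimpleGraph V) vin vout) := by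
  have hconv := convex_convexHull ℝ (traceSet (⊤ : SimpleGraph V) vin vout)
  have hbase := subset_convexHull ℝ _ (single_add_single_mem_traceSet (G := ⊤) hne)
  rw [← one_smul ℝ (∑ v ∈ W, _)]
  refine add_smul_sum_mem_of_forall_smul hconv hbase (fun v hv =>
    add_smul_sum_mem_of_forall_smul hconv hbase fun w hw b hb => ?_) 1 zero_le_one
  obtain ⟨hwv, hwW⟩ := mem_erase.1 hw
  rw [smul_smul]
  exact add_smul_mem_of_forall_nat hconv (fun N => subset_convexHull ℝ _
    (add_roundTrips_mem_traceSet_top hne (ne_of_mem_of_not_mem hv hW)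
      (ne_of_mem_of_not_mem hwW hW) hwv.symm N)) (mul_nonneg hb (hc v w))

theorem sum_pairs_single_apply {W : Finset V} {c : V → V → ℝ} (hc : ∀ v w, c v w = c w v) {u : V}
    (hu : u ∈ W) :
    (∑ v ∈ W, ∑ w ∈ W.erase v, c v w • (Pi.single v 1 + Pi.single w 1 : V → ℝ)) u =
      2 * ∑ w ∈ W.erase u, c u w := by
  have hfst : ∑ v ∈ W, ∑ w ∈ W.erase v, c v w * (Pi.single v 1 : V → ℝ) u =
      ∑ w ∈ W.erase u, c u w := by
    simp_rw [← sum_mul, Pi.single_apply, mul_ite, mul_one, mul_zero, sum_ite_eq W u, if_pos hu]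
  have hsnd : ∑ v ∈ W, ∑ w ∈ W.erase v, c v w * (Pi.single w 1 : V → ℝ) u =
      ∑ v ∈ W, ∑ w ∈ W.erase v, c v w * (Pi.single v 1 : V → ℝ) u := by
    rw [sum_comm' (t' := W) (s' := fun w => W.erase w) (by grind)]
    simp_rw [hc]
  simp only [Finset.sum_apply, Pi.smul_apply, Pi.add_apply, smul_eq_mul, mul_add, sum_add_distrib]
  rw [hsnd, hfst, two_mul]

end Hull

section Psi

variable {V : Type*} [Fintype V] [DecidableEq V] {vin vout : V} {r : V → ℝ}

/-- What is added to the trace of the direct walk `vin, vout` to get the point of the convex hull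
that carries weight `β v` in the occupation vector: one visit to `v`, nothing for `v = vin`, and for
`v = vout` a mixture of round trips between pairs of vertices, whose coefficients absorb the
remaining occupation time. -/
def detour (vin vout : V) (β : V → ℝ) (v : V) : V → ℝ :=
  if v = vout then
    ∑ x ∈ univ.erase vout, ∑ y ∈ (univ.erase vout).erase x,
      (β x * β y / (2 * β vout ^ 2)) • (Pi.single x 1 + Pi.single y 1)
  else if v = vin then 0 else Pi.single v 1

variable {β : V → ℝ}

theorem add_detour_mem_convexHull_traceSet_top (hβ : ∀ v, 0 ≤ β v) (hne : vin ≠ vout) (v : V) :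
    (Pi.single vin 1 + Pi.single vout 1) + detour vin vout β v
      ∈ convexHull ℝ (traceSet (⊤ : SimpleGraph V) vin vout) := by
  unfold detour
  split_ifs with hv hvin
  · exact add_sum_pairs_mem_convexHull_traceSet_top hne (notMem_erase vout univ)
      fun x y => div_nonneg (mul_nonneg (hβ x) (hβ y)) (by positivity)
  · simpa using subset_convexHull ℝ _ (single_add_single_mem_traceSet (G := ⊤) hne)
  · exact subset_convexHull ℝ _ (single_add_single_add_single_mem_traceSet_top hne hv hvin)

theorem detour_out_apply (hsum : ∑ v, β v = 1) {u : V} (hu : u ≠ vout) :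
    detour vin vout β vout u = β u * (1 - β vout - β u) / β vout ^ 2 := by
  have huW : u ∈ univ.erase vout := mem_erase.2 ⟨hu, mem_univ u⟩
  rw [detour, if_pos rfl, sum_pairs_single_apply (fun x y => by rw [mul_comm (β x)]) huW, ← sum_div,
    ← mul_sum, sum_erase_eq_sub huW, sum_erase_eq_sub (mem_univ _), hsum]
  ring

theorem sum_erase_mul_detour_apply {u : V} (hu : u ≠ vout) :
    ∑ v ∈ univ.erase vout, β v * detour vin vout β v u =
      β u * (1 - (Pi.single vin 1 : V → ℝ) u) := by
  rw [sum_eq_single u]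
  · rw [detour, if_neg hu]
    by_cases huin : u = vin <;> simp [huin]
  · intro v hv hvu
    rw [detour, if_neg (ne_of_mem_erase hv)]
    by_cases hvin : v = vin <;> simp [hvin, hvu.symm]
  · simp [hu]

theorem IsOccupation.eq_sum_smul_add_detour (h : IsOccupation vin vout β r) (hne : vin ≠ vout) :
    r = ∑ v, β v • ((Pi.single vin 1 + Pi.single vout 1) + detour vin vout β v) := by
  have hβout := (h.pos vout).ne'
  ext u
  obtain rfl | hu := eq_or_ne u vout
  · have hone (v : V) := apply_out_of_mem_affineSpan_convexHull_traceSet (subset_affineSpan ℝ _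
      (add_detour_mem_convexHull_traceSet_top (fun w => (h.pos w).le) hne v))
    simp only [Finset.sum_apply, Pi.smul_apply, hone, smul_eq_mul, mul_one, h.sum_eq_one,
      h.apply_out]
  · simp only [Finset.sum_apply, Pi.smul_apply, smul_eq_mul, Pi.add_apply, mul_add,
      sum_add_distrib, ← sum_mul, h.sum_eq_one, Pi.single_eq_of_ne hu]
    rw [← add_sum_erase _ _ (mem_univ vout), detour_out_apply h.sum_eq_one hu,
      sum_erase_mul_detour_apply hu, h.apply_of_ne u hu]
    field_simp
    ring

theorem IsOccupation.mem_convexHull_traceSet (h : IsOccupation vin vout β r) (hne : vin ≠ vout) :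
    r ∈ convexHull ℝ (traceSet (⊤ : SimpleGraph V) vin vout) := by
  have hβ (v : V) : 0 ≤ β v := (h.pos v).le
  rw [h.eq_sum_smul_add_detour hne]
  exact (convex_convexHull ℝ _).sum_mem (fun v _ => hβ v) h.sum_eq_one
    fun v _ => add_detour_mem_convexHull_traceSet_top hβ hne v

theorem mem_Psi_top_of_mem_occupationRegion (hne : vin ≠ vout) (hout : r vout = 1)
    (hr : r ∈ occupationRegion vin vout) : r ∈ Psi (⊤ : SimpleGraph V) vin vout := by
  have hhull {s : V → ℝ} (hs : s ∈ occupationRegion vin vout) (hout : s vout = 1) :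
      s ∈ convexHull ℝ (traceSet (⊤ : SimpleGraph V) vin vout) :=
    let ⟨_, h⟩ := exists_isOccupation_of_mem_occupationRegion hne hout hs
    h.mem_convexHull_traceSet hne
  exact mem_intrinsicInterior_of_isOpen (isOpen_occupationRegion vin vout)
    (fun s hs => hhull hs.1 (apply_out_of_mem_affineSpan_convexHull_traceSet hs.2)) hr
    (hhull hr hout)

theorem exists_isOccupation (vin vout : V) : ∃ β r, IsOccupation vin vout β r :=
  have hcard : (0 : ℝ) < Fintype.card V := Nat.cast_pos.2 (Fintype.card_pos_iff.2 ⟨vin⟩)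
  ⟨fun _ => (Fintype.card V : ℝ)⁻¹,
    IsOccupation.exists_of_weights vin vout (fun _ => inv_pos.2 hcard) (by simp [hcard.ne'])⟩

theorem mem_occupationRegion_of_mem_Psi_top (hV : 3 ≤ Fintype.card V) (hne : vin ≠ vout)
    (hr : r ∈ Psi (⊤ : SimpleGraph V) vin vout) : r ∈ occupationRegion vin vout := by
  obtain ⟨_, p, hp⟩ := exists_isOccupation vin vout
  have hpregion := hp.mem_occupationRegion hV hne
  have hphull := hp.mem_convexHull_traceSet hne
  intro v hv
  constructor
  · exact lt_of_mem_intrinsicInterior_convexHull (LinearMap.proj v)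
      (fun f hf => single_le_of_mem_traceSet hf v) hphull (hpregion v hv).1 hr
  · let excess : (V → ℝ) →ₗ[ℝ] ℝ :=
      ∑ w ∈ (univ.erase vout).erase v, (LinearMap.proj w : (V → ℝ) →ₗ[ℝ] ℝ) - LinearMap.proj v
    have hexcess (f : V → ℝ) : excess f = ∑ w ∈ (univ.erase vout).erase v, f w - f v := by
      simp [excess]
    have hlt : -(Pi.single vin 1 : V → ℝ) v < excess r := by
      refine lt_of_mem_intrinsicInterior_convexHull excess (fun f hf => ?_) hphull ?_ hr
      · linarith [hexcess f, sub_single_le_sum_of_mem_traceSet hf hv]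
      · linarith [hexcess p, (hpregion v hv).2]
    linarith [hexcess r]

theorem mem_Psi_top_iff_mem_occupationRegion (hV : 3 ≤ Fintype.card V) (hne : vin ≠ vout) :
    r ∈ Psi (⊤ : SimpleGraph V) vin vout ↔ r vout = 1 ∧ r ∈ occupationRegion vin vout := by
  refine ⟨fun hr => ⟨?_, mem_occupationRegion_of_mem_Psi_top hV hne hr⟩,
    fun ⟨hout, hr⟩ => mem_Psi_top_of_mem_occupationRegion hne hout hr⟩
  exact apply_out_of_mem_affineSpan_convexHull_traceSet
    (subset_affineSpan ℝ _ (intrinsicInterior_subset hr))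

end Psi

theorem solvable_iff_mem_Psi_completeGraph_general {V : Type*} [Fintype V] [DecidableEq V]
    (hV : 3 ≤ Fintype.card V) {vin vout : V} (hne : vin ≠ vout) (r : V → ℝ) :
    Solvable (⊤ : SimpleGraph V) vin vout r ↔ r ∈ Psi (⊤ : SimpleGraph V) vin vout := by
  rw [solvable_top_iff_mem_occupationRegion hV hne, mem_Psi_top_iff_mem_occupationRegion hV hne]

/-- For the complete graph `K_n` with `vout = v_1`, `vin = v_2`, the equation `τ_ρ = r`
is solvable iff `r ∈ Ψ(G)`. -/
theorem solvable_iff_mem_Psi_completeGraph (n : ℕ) (hn : 3 ≤ n) (r : Fin n → ℝ) :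
    Solvable (⊤ : SimpleGraph (Fin n)) ⟨1, by omega⟩ ⟨0, by omega⟩ r ↔
      r ∈ Psi (⊤ : SimpleGraph (Fin n)) ⟨1, by omega⟩ ⟨0, by omega⟩ :=
  solvable_iff_mem_Psi_completeGraph_general (by simpa using hn) (by simp) r

end
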